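/- Fix integers k ≥ r ≥ 3, u ∈ ω(1) ∩ o(n), a constant μ > 0, and set m = ⌈μ·n^{r−1}/u(n)^{r−2}⌉. Consider the Markov chain for the upper bound (Ē(t), C̄_{k−r+2}(t),…,C̄_k(t)) driven by the random ensemble. Then for any constants τ > 0 and λ ∈ ℝ, log E[exp(λ·Ē(⌊τ·u(n)⌋))] = φ_{k,r}(μ,λ,τ)·u(n) + O(max{1, u(n)²/n}) as n → ∞, i.e., E[exp(λ·Ē(⌊τ·u(n)⌋))] = exp( φ_{k,r}(μ,λ,τ)·u(n) + O(max{1, u(n)²/n}) ). -/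

import Mathlib

open Filter Finset Asymptotics

noncomputable section

/-- Neighborhood `∂(a)` of constraint `a` in the bipartite graph given by `ω`. -/
def nbhd {n m k : ℕ} (ω : Fin m → (Fin k ↪ Fin n)) (a : Fin m) : Finset (Fin n) :=
  Finset.univ.image (ω a)

/-- `V` is a `d`-stopping set: every constraint meets `V` in `0` or at least `d` variables. -/
def IsStoppingSet {n m k : ℕ} (d : ℕ) (ω : Fin m → (Fin k ↪ Fin n))
    (V : Finset (Fin n)) : Prop :=
  ∀ a : Fin m, (nbhd ω a ∩ V).card = 0 ∨ d ≤ (nbhd ω a ∩ V).card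

/-- Probability of an event under the uniform random bipartite-graph ensemble:
each of the `m` constraints independently picks a uniformly random `k`-tuple of
distinct indices from `{1,…,n}` (an embedding `Fin k ↪ Fin n`). -/
def prG (n m k : ℕ) (P : (Fin m → (Fin k ↪ Fin n)) → Prop) : ℝ :=
  letI := Classical.decPred P
  ((Finset.univ.filter P).card : ℝ) / (Fintype.card (Fin m → (Fin k ↪ Fin n)) : ℝ)

/-- `u ∈ ω(1) ∩ o(n)`. -/
def UGood (u : ℕ → ℕ) : Prop :=
  Tendsto (fun n => (u n : ℝ)) atTop atTop ∧
    Tendsto (fun n => (u n : ℝ) / (n : ℝ)) atTop (nhds 0)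

/-- `μ_c(k,r) = binom(k,r)⁻¹ (r-2)^(r-2) / (r (r-1)^(r-1))`. -/
def muc (k r : ℕ) : ℝ :=
  ((k.choose r : ℝ))⁻¹ * (((r : ℝ) - 2) ^ (r - 2) / ((r : ℝ) * ((r : ℝ) - 1) ^ (r - 1)))

/-- `φ_{k,r}(μ,λ,τ) = μ (e^{(k-r+1)λ} - 1) binom(k,r-1) (1+τ)^{r-1} - λτ`. -/
def phiE (k r : ℕ) (μ lam τ : ℝ) : ℝ :=
  μ * (Real.exp (((k : ℝ) - (r : ℝ) + 1) * lam) - 1) * (k.choose (r - 1) : ℝ)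
      * (1 + τ) ^ (r - 1)
    - lam * τ

/-- Membership in the local marginal polytope LOCAL: each `B a` is a distribution on
`[q]^k`, each `b i` is a distribution on `[q]`, and the marginalization conditions hold. -/
def MemLOCAL {n m q k : ℕ} (nb : Fin m → (Fin k ↪ Fin n))
    (b : Fin n → Fin q → ℝ) (B : Fin m → (Fin k → Fin q) → ℝ) : Prop :=
  (∀ i x, 0 ≤ b i x) ∧ (∀ i, ∑ x, b i x = 1) ∧
  (∀ a z, 0 ≤ B a z) ∧ (∀ a, ∑ z, B a z = 1) ∧
  (∀ (a : Fin m) (j : Fin k) (x : Fin q),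
    b (nb a j) x = ∑ z : Fin k → Fin q, if z j = x then B a z else 0)

/-- A point of LOCAL is zero-optimal if each `B a` is supported on `f_a⁻¹(y_a)`. -/
def ZeroOptimal {m q k l : ℕ} (f : Fin m → (Fin k → Fin q) → (Fin l → Fin q))
    (y : Fin m → Fin l → Fin q) (B : Fin m → (Fin k → Fin q) → ℝ) : Prop :=
  ∀ a z, B a z ≠ 0 → f a z = y a

/-- Integral part of a point of LOCAL. -/
def integralPart {n q : ℕ} (b : Fin n → Fin q → ℝ) : Finset (Fin n) :=
  letI := Classical.decPred fun i : Fin n => ∃ x : Fin q, b i x = 1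
  Finset.univ.filter fun i : Fin n => ∃ x : Fin q, b i x = 1

/-- `f : [q]^k → [q]^l` is `w`-wise independent. -/
def WiseIndep (q k l w : ℕ) (f : (Fin k → Fin q) → (Fin l → Fin q)) : Prop :=
  ∀ T : Finset (Fin k), T.card ≤ w → ∀ xT : Fin k → Fin q, ∀ y : Fin l → Fin q,
    (Finset.univ.filter fun x : Fin k → Fin q =>
        (∀ i ∈ T, x i = xT i) ∧ f x = y).card
      = q ^ (k - T.card - l)

/-- Minimum Hamming distance of a code. -/
def minHammingDist {A : Type*} [DecidableEq A] {k : ℕ} (M : Finset (Fin k → A)) : ℕ :=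
  sInf {d | ∃ x ∈ M, ∃ y ∈ M, x ≠ y ∧ hammingDist x y = d}

/-- `M` is an MDS code of length `k` and dimension `r-1`. -/
def IsMDSCode (A : Type*) [Fintype A] [DecidableEq A] (k r : ℕ)
    (M : Finset (Fin k → A)) : Prop :=
  M.card = Fintype.card A ^ (r - 1) ∧ minHammingDist M = k - r + 2

/-- `f` has MDS inverse image of dimension `r-1`. -/
def HasMDSInv (q k r : ℕ) (f : (Fin k → Fin q) → (Fin (k - r + 1) → Fin q)) : Prop :=
  ∀ y : Fin (k - r + 1) → Fin q,
    IsMDSCode (Fin q) k r (Finset.univ.filter fun x => f x = y)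

instance {n m k : ℕ} (d : ℕ) (ω : Fin m → (Fin k ↪ Fin n)) :
    DecidablePred fun V : Finset (Fin n) => IsStoppingSet d ω V := fun V => by
  unfold IsStoppingSet; infer_instance
/-- The binomial point mass `binom(n,i) p^i (1-p)^(n-i)`. -/
def binomPMF (n : ℕ) (p : ℝ) (i : ℕ) : ℝ := (n.choose i : ℝ) * p ^ i * (1 - p) ^ (n - i)

/-- `C_j(0)`: the number of constraints whose neighborhood meets the unknown
variables `{u+1,…,n}` in exactly `j` variables. -/
def Cinit (n m k u : ℕ) (ω : Fin m → (Fin k ↪ Fin n)) (j : ℕ) : ℕ :=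
  (Finset.univ.filter fun a : Fin m =>
    ((nbhd ω a).filter fun i : Fin n => u ≤ (i : ℕ)).card = j).card

/-- Initial state of the peeling Markov chains: `E(0) = ∑_{j=1}^{k-r+1} j C_j(0)` and
`C_j(0)` for every `j`. -/
def initState (n m k r u : ℕ) (ω : Fin m → (Fin k ↪ Fin n)) : ℤ × (ℕ → ℕ) :=
  (∑ j ∈ Finset.Icc 1 (k - r + 1), (j : ℤ) * (Cinit n m k u ω j : ℤ),
   fun j => Cinit n m k u ω j)

/-- Extend a vector `R : Fin (r-1) → ℕ` (indexed by `j = k-r+2,…,k`) to all of `ℕ` by `0`. -/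
def Rext (k r : ℕ) (R : Fin (r - 1) → ℕ) (j : ℕ) : ℕ :=
  if h : k - r + 2 ≤ j ∧ j - (k - r + 2) < r - 1 then R ⟨j - (k - r + 2), h.2⟩ else 0

/-- One-step transition operator (at time `t`) of the Markov chain for the upper bound:
`(T_t g)(s) = E[g(next state) | state at time t = s]`, where independently
`R̄_j ~ Binom(C̄_j, j/N(t))` for `j = k-r+2,…,k`, `C̄_k` is unchanged,
`C̄_j ← C̄_j + R̄_{j+1}` for `j = k-r+2,…,k-1`, and `Ē ← Ē - 1 + (k-r+1) R̄_{k-r+2}`. -/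
def upperStep (k r n u t : ℕ) (g : ℤ × (ℕ → ℕ) → ℝ) (s : ℤ × (ℕ → ℕ)) : ℝ :=
  ∑' R : Fin (r - 1) → ℕ,
    (∏ i : Fin (r - 1),
      binomPMF (s.2 (k - r + 2 + (i : ℕ)))
        (((k - r + 2 + (i : ℕ) : ℕ) : ℝ) / ((n : ℝ) - (u : ℝ) - (t : ℝ))) (R i)) *
    g (s.1 - 1 + ((k - r + 1 : ℕ) : ℤ) * (Rext k r R (k - r + 2) : ℤ),
       fun j => if k - r + 2 ≤ j ∧ j < k then s.2 j + Rext k r R (j + 1) else s.2 j)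

/-- `upperIter k r n u s t g = T_s (T_{s+1} (⋯ (T_{s+t-1} g)))`, so that
`E[g(X_t)] = E[(upperIter k r n u 0 t g) (X_0)]` for the upper-bound chain. -/
def upperIter (k r n u : ℕ) : ℕ → ℕ → (ℤ × (ℕ → ℕ) → ℝ) → ℤ × (ℕ → ℕ) → ℝ
  | _, 0, g => g
  | s, t + 1, g => upperStep k r n u s (upperIter k r n u (s + 1) t g)

/-- `E[g(X̄(t))]` for the upper-bound Markov chain driven by the random ensemble. -/
def upperE (k r n u m t : ℕ) (g : ℤ × (ℕ → ℕ) → ℝ) : ℝ :=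
  (∑ ω : Fin m → (Fin k ↪ Fin n), upperIter k r n u 0 t g (initState n m k r u ω))
    / (Fintype.card (Fin m → (Fin k ↪ Fin n)) : ℝ)

/-- One-step transition operator (at time `t`) of the Markov chain for the lower bound:
independently `R̲_j ~ Binom(C̲_j, j/N(t))` for `j = k-r+2,…,k` and
`S̲ ~ Binom(E̲+t, 1/(N(t)-k+r))`; then `C̲_k ← C̲_k - R̲_k`,
`C̲_j ← C̲_j - R̲_j + R̲_{j+1}` for `j = k-r+2,…,k-1`, and
`E̲ ← E̲ - 1 - S̲ + (k-r+1) R̲_{k-r+2}`. -/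
def lowerStep (k r n u t : ℕ) (g : ℤ × (ℕ → ℕ) → ℝ) (s : ℤ × (ℕ → ℕ)) : ℝ :=
  ∑' RS : (Fin (r - 1) → ℕ) × ℕ,
    ((∏ i : Fin (r - 1),
        binomPMF (s.2 (k - r + 2 + (i : ℕ)))
          (((k - r + 2 + (i : ℕ) : ℕ) : ℝ) / ((n : ℝ) - (u : ℝ) - (t : ℝ))) (RS.1 i)) *
      binomPMF (s.1 + (t : ℤ)).toNat
        (1 / ((n : ℝ) - (u : ℝ) - (t : ℝ) - (k : ℝ) + (r : ℝ))) RS.2) *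
    g (s.1 - 1 - (RS.2 : ℤ) + ((k - r + 1 : ℕ) : ℤ) * (Rext k r RS.1 (k - r + 2) : ℤ),
       fun j => if k - r + 2 ≤ j ∧ j ≤ k
         then s.2 j - Rext k r RS.1 j + Rext k r RS.1 (j + 1) else s.2 j)

/-- `lowerIter k r n u s t g = T_s (T_{s+1} (⋯ (T_{s+t-1} g)))` for the lower-bound chain. -/
def lowerIter (k r n u : ℕ) : ℕ → ℕ → (ℤ × (ℕ → ℕ) → ℝ) → ℤ × (ℕ → ℕ) → ℝ
  | _, 0, g => g
  | s, t + 1, g => lowerStep k r n u s (lowerIter k r n u (s + 1) t g)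

/-- `E[g(X̲(t))]` for the lower-bound Markov chain driven by the random ensemble. -/
def lowerE (k r n u m t : ℕ) (g : ℤ × (ℕ → ℕ) → ℝ) : ℝ :=
  (∑ ω : Fin m → (Fin k ↪ Fin n), lowerIter k r n u 0 t g (initState n m k r u ω))
    / (Fintype.card (Fin m → (Fin k ↪ Fin n)) : ℝ)

/-! The observable `exp (lam * E)` of the chain is multiplicative over the pending variables and the
constraints, and one step of the chain preserves this form, so that the expectation over the chain
is `exp (-lam * T)` times a product over the constraints of weights obeying an explicit recursion.
As the constraints of the ensemble are independent,
`E[exp (lam * E T)] = exp (-lam * T) * (1 + w) ^ m` holds exactly, where `1 + w` is the mean weight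
of one constraint. For `d = k - r + 1`, a constraint with `d + i` unknown variables has weight
`1 + (exp (lam * d) - 1) * (d + i).choose i * (T / n) ^ i` to leading order: it must lose `i` of its
variables during the `T` steps in order to release the other `d`. With `T ≈ τ * u`, averaging over
the hypergeometric number of initially unknown variables and summing the resulting binomial
expansion gives `w ≈ (exp (lam * d) - 1) * k.choose d * (1 + τ) ^ (r - 1) * (u / n) ^ (r - 1)`.
Every approximation has relative error `O(1 / u + u / n)`, and
`m * log (1 + w) - lam * T ≈ φ * u`. -/

open scoped Topology

section LeadingTerm

variable {α 𝕜 ι : Type*} [NormedField 𝕜] {l : Filter α} {ε f g s s' : α → 𝕜} {a b : 𝕜}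

/-- The asymptotic expansion `f = a * s + O(ε * s)`: the function `f` has leading coefficient `a`
on the scale `s`, with relative error `ε`. The coefficient `a` may vanish, in which case this says
`f = O(ε * s)`. -/
def HasLeadingTerm (l : Filter α) (ε f : α → 𝕜) (a : 𝕜) (s : α → 𝕜) : Prop :=
  (fun x => f x - a * s x) =O[l] fun x => ε x * s x

namespace HasLeadingTerm

lemma self (l : Filter α) (ε s : α → 𝕜) : HasLeadingTerm l ε s 1 s := by
  simp only [HasLeadingTerm, one_mul, sub_self]
  exact isBigO_zero _ _

lemma of_isBigO (hf : f =O[l] fun x => ε x * s x) : HasLeadingTerm l ε f 0 s := by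
  simpa only [HasLeadingTerm, zero_mul, sub_zero] using hf

lemma add (hf : HasLeadingTerm l ε f a s) (hg : HasLeadingTerm l ε g b s) :
    HasLeadingTerm l ε (fun x => f x + g x) (a + b) s :=
  (IsBigO.add hf hg).congr_left fun x => by ring

lemma add_isBigO (hf : HasLeadingTerm l ε f a s)
    (hg : (fun x => g x - f x) =O[l] fun x => ε x * s x) :
    HasLeadingTerm l ε g a s := by
  simpa using hf.add (of_isBigO hg)

lemma const_mul (c : 𝕜) (hf : HasLeadingTerm l ε f a s) :
    HasLeadingTerm l ε (fun x => c * f x) (c * a) s :=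
  (IsBigO.const_mul_left hf c).congr_left fun x => by ring

lemma sum (t : Finset ι) {F : ι → α → 𝕜} {A : ι → 𝕜}
    (h : ∀ i ∈ t, HasLeadingTerm l ε (F i) (A i) s) :
    HasLeadingTerm l ε (fun x => ∑ i ∈ t, F i x) (∑ i ∈ t, A i) s :=
  (IsBigO.sum h).congr_left fun x => by
    rw [Finset.sum_apply, Finset.sum_sub_distrib, Finset.sum_mul]

lemma congr' (hf : HasLeadingTerm l ε f a s) (hfg : f =ᶠ[l] g) (hs : s =ᶠ[l] s') :
    HasLeadingTerm l ε g a s' :=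
  IsBigO.congr' hf (hfg.sub (hs.const_smul a)) ((EventuallyEq.refl l ε).fun_mul hs)

lemma isBigO (hε : ε =O[l] fun _ => (1 : 𝕜)) (hf : HasLeadingTerm l ε f a s) : f =O[l] s := by
  have herr : (fun x => f x - a * s x) =O[l] s := by
    simpa only [one_mul] using IsBigO.trans hf (hε.mul (isBigO_refl s l))
  simpa only [sub_add_cancel] using herr.add ((isBigO_refl s l).const_mul_left a)

lemma mul (hε : ε =O[l] fun _ => (1 : 𝕜)) (hf : HasLeadingTerm l ε f a s)
    (hg : HasLeadingTerm l ε g b s') :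
    HasLeadingTerm l ε (fun x => f x * g x) (a * b) (fun x => s x * s' x) := by
  have hfst : (fun x => (f x - a * s x) * g x) =O[l] fun x => ε x * (s x * s' x) :=
    (IsBigO.mul hf (hg.isBigO hε)).congr_right fun x => by ring
  have hsnd : (fun x => a * s x * (g x - b * s' x)) =O[l] fun x => ε x * (s x * s' x) :=
    (((isBigO_refl s l).const_mul_left a).mul hg).congr_right fun x => by ring
  exact (hfst.add hsnd).congr_left fun x => by ring

lemma isEquivalent (hε : Tendsto ε l (𝓝 0)) (ha : a ≠ 0) (hf : HasLeadingTerm l ε f a s) :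
    f ~[l] fun x => a * s x := by
  have herr : (fun x => ε x * s x) =o[l] s := by
    simpa only [one_mul] using ((isLittleO_one_iff 𝕜).2 hε).mul_isBigO (isBigO_refl s l)
  exact (IsBigO.trans_isLittleO hf herr).trans_isBigO (isBigO_self_const_mul ha s l)

lemma inv (hε : Tendsto ε l (𝓝 0)) (ha : a ≠ 0) (hf : HasLeadingTerm l ε f a s) :
    HasLeadingTerm l ε (fun x => (f x)⁻¹) a⁻¹ (fun x => (s x)⁻¹) := by
  have hequiv := hf.isEquivalent hε ha
  have hinv : (fun x => (f x)⁻¹ * (s x)⁻¹) =O[l] fun x => (s x)⁻¹ * (s x)⁻¹ := by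
    refine IsBigO.mul (hequiv.inv.isBigO.trans ?_) (isBigO_refl _ l)
    simp only [Pi.inv_def, mul_inv]
    exact isBigO_const_mul_self a⁻¹ _ l
  have hmain := ((IsBigO.mul hf hinv).const_mul_left (-a⁻¹))
  obtain ⟨φ, hφ, hfφ⟩ := hequiv.exists_eq_mul
  refine IsBigO.congr' hmain ?_ ?_
  · filter_upwards [hfφ, hφ.eventually_ne one_ne_zero] with x hx hφx
    rcases eq_or_ne (s x) 0 with hs | hs
    · simp [hx, hs]
    · have : f x ≠ 0 := by simp [hx, hs, ha, hφx]
      field_simp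
      ring
  · filter_upwards with x
    rcases eq_or_ne (s x) 0 with hs | hs
    · simp [hs]
    · field_simp

end HasLeadingTerm

end LeadingTerm

section RealLeadingTerm

variable {α : Type*} {l : Filter α} {ε f s : α → ℝ} {a : ℝ}

lemma isBigO_pow_pow_of_le (hf : f =O[l] fun _ => (1 : ℝ)) {i j : ℕ} (hij : i ≤ j) :
    (fun x => f x ^ j) =O[l] fun x => f x ^ i := by
  obtain ⟨c, rfl⟩ := Nat.exists_eq_add_of_le hij
  simpa only [pow_add, one_pow, mul_one] using (isBigO_refl (fun x => f x ^ i) l).mul (hf.pow c)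

lemma isBigO_log_one_add_sub_self :
    (fun x : ℝ => Real.log (1 + x) - x) =O[𝓝 0] fun x => x ^ 2 := by
  have hsmall : ∀ᶠ x : ℝ in 𝓝 0, |x| < 1 / 2 :=
    continuousAt_id.abs.eventually_lt_const (by norm_num)
  refine .of_bound 2 ?_
  filter_upwards [hsmall] with x hx
  have hlog := Real.abs_log_sub_add_sum_range_le (x := -x) (by rw [abs_neg]; linarith) 1
  have hden : x ^ 2 / (1 - |x|) ≤ 2 * x ^ 2 := by
    rw [div_le_iff₀ (by linarith)]
    nlinarith [sq_nonneg x]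
  simp only [sum_range_one, Nat.cast_zero, zero_add, pow_one, div_one, sub_neg_eq_add, abs_neg,
    one_add_one_eq_two, sq_abs] at hlog
  rw [Real.norm_eq_abs, Real.norm_eq_abs, abs_of_nonneg (sq_nonneg x), sub_eq_neg_add]
  exact hlog.trans hden

namespace HasLeadingTerm

lemma log_one_add (hε : ε =O[l] fun _ => (1 : ℝ)) (hs : Tendsto s l (𝓝 0)) (hsε : s =O[l] ε)
    (hf : HasLeadingTerm l ε f a s) :
    HasLeadingTerm l ε (fun x => Real.log (1 + f x)) a s := by
  have hfs := hf.isBigO hε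
  refine hf.add_isBigO ((isBigO_log_one_add_sub_self.comp_tendsto (hfs.trans_tendsto hs)).trans ?_)
  simpa only [Function.comp_def, sq] using (hfs.trans hsε).mul hfs

lemma natChoose {v : α → ℕ} (hε : ε =O[l] fun _ => (1 : ℝ))
    (hone : (fun _ => (1 : ℝ)) =O[l] fun x => ε x * s x)
    (hv : HasLeadingTerm l ε (fun x => (v x : ℝ)) a s) (i : ℕ) :
    HasLeadingTerm l ε (fun x => ((v x).choose i : ℝ)) (a ^ i / i.factorial)
      (fun x => s x ^ i) := by
  induction i with
  | zero => simpa using HasLeadingTerm.self l ε fun _ => (1 : ℝ)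
  | succ i ih =>
    have hsub : HasLeadingTerm l ε (fun x => (v x : ℝ) - i) a s :=
      hv.add_isBigO (by simpa using (isBigO_const_const (i : ℝ) one_ne_zero l).trans hone)
    have hchoose : ∀ x, (i + 1 : ℝ)⁻¹ * ((v x).choose i * (v x - i)) = (v x).choose (i + 1) :=
      fun x => by
        rw [inv_mul_eq_iff_eq_mul₀ (by positivity), mul_comm (i + 1 : ℝ)]
        rcases le_or_gt i (v x) with hi | hi
        · rw [← Nat.cast_sub hi]
          exact_mod_cast (Nat.choose_succ_right_eq (v x) i).symm
        · simp [Nat.choose_eq_zero_of_lt hi, Nat.choose_eq_zero_of_lt (hi.trans i.lt_succ_self)]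
    have hcoeff : (i + 1 : ℝ)⁻¹ * (a ^ i / i.factorial * a) = a ^ (i + 1) / (i + 1).factorial := by
      rw [Nat.factorial_succ]
      push_cast
      field_simp
      ring
    simpa only [hchoose, hcoeff, ← pow_succ] using (ih.mul hε hsub).const_mul (i + 1 : ℝ)⁻¹

lemma natFloor (hone : (fun _ => (1 : ℝ)) =O[l] fun x => ε x * s x) (hf0 : ∀ᶠ x in l, 0 ≤ f x)
    (hf : HasLeadingTerm l ε f a s) : HasLeadingTerm l ε (fun x => (⌊f x⌋₊ : ℝ)) a s := by
  refine hf.add_isBigO (IsBigO.trans (.of_bound 1 ?_) hone)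
  filter_upwards [hf0] with x hx
  rw [norm_one, mul_one, Real.norm_eq_abs, abs_le]
  constructor <;> linarith [Nat.floor_le hx, Nat.lt_floor_add_one (f x)]

lemma natCeil (hone : (fun _ => (1 : ℝ)) =O[l] fun x => ε x * s x) (hf0 : ∀ᶠ x in l, 0 ≤ f x)
    (hf : HasLeadingTerm l ε f a s) : HasLeadingTerm l ε (fun x => (⌈f x⌉₊ : ℝ)) a s := by
  refine hf.add_isBigO (IsBigO.trans (.of_bound 1 ?_) hone)
  filter_upwards [hf0] with x hx
  rw [norm_one, mul_one, Real.norm_eq_abs, abs_le]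
  constructor <;> linarith [Nat.le_ceil (f x), Nat.ceil_lt_add_one hx]

end HasLeadingTerm

end RealLeadingTerm

section UpTo

variable {α E : Type*} [NormedAddCommGroup E] {l : Filter α} {T : α → ℕ}

/-- The filter on pairs `(x, t)` for which `x` tends to `l` while `t ≤ T x` is arbitrary: asymptotic
statements along it are statements along `l` that hold uniformly in `t ∈ {0, …, T x}`. -/
def uniformUpTo (l : Filter α) (T : α → ℕ) : Filter (α × ℕ) :=
  comap Prod.fst l ⊓ 𝓟 {p | p.2 ≤ T p.1}

lemma eventually_uniformUpTo {P : α × ℕ → Prop} :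
    (∀ᶠ p in uniformUpTo l T, P p) ↔ ∀ᶠ x in l, ∀ t ≤ T x, P (x, t) := by
  simp only [uniformUpTo, eventually_inf_principal, eventually_comap, Set.mem_ofPred_eq]
  exact eventually_congr (.of_forall fun x => by aesop)

lemma tendsto_fst_uniformUpTo : Tendsto Prod.fst (uniformUpTo l T) l :=
  tendsto_comap.mono_left inf_le_left

lemma tendsto_graph_uniformUpTo : Tendsto (fun x => (x, T x)) l (uniformUpTo l T) := by
  refine tendsto_iff_eventually.2 fun P hP => ?_
  filter_upwards [eventually_uniformUpTo.1 hP] with x hx using hx _ le_rfl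

lemma isBigO_snd_uniformUpTo :
    (fun p => (p.2 : ℝ)) =O[uniformUpTo l T] fun p => (T p.1 : ℝ) := by
  refine IsBigO.of_bound 1 (eventually_uniformUpTo.2 (.of_forall fun x t ht => ?_))
  simpa using ht

lemma isBigO_sum_uniformUpTo {f : α × ℕ → E} {g : α → ℝ}
    (hf : f =O[uniformUpTo l T] fun p => g p.1) :
    (fun p : α × ℕ => ∑ s ∈ range p.2, f (p.1, s)) =O[uniformUpTo l T]
      fun p => (T p.1 : ℝ) * g p.1 := by
  obtain ⟨C, hC, hbound⟩ := hf.exists_pos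
  refine IsBigO.of_bound C (eventually_uniformUpTo.2 ?_)
  filter_upwards [eventually_uniformUpTo.1 hbound.bound] with x hx t ht
  calc ‖∑ s ∈ range t, f (x, s)‖ ≤ ∑ _s ∈ range t, C * ‖g x‖ :=
        norm_sum_le_of_le _ fun s hs => hx s ((mem_range.1 hs).le.trans ht)
    _ = t * (C * ‖g x‖) := by rw [sum_const, card_range, nsmul_eq_mul]
    _ ≤ T x * (C * ‖g x‖) := by gcongr
    _ = C * ‖(T x : ℝ) * g x‖ := by rw [norm_mul, RCLike.norm_natCast]; ring

lemma prod_range_one_add_sub_one {R : Type*} [CommRing R] (a : ℕ → R) (t : ℕ) :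
    ∏ s ∈ range t, (1 + a s) - 1 = ∑ s ∈ range t, a s * ∏ r ∈ range s, (1 + a r) := by
  induction t with
  | zero => simp
  | succ t ih => rw [prod_range_succ, sum_range_succ, ← ih]; ring

variable {R : Type*} [NormedCommRing R] [NormOneClass R] {a : α × ℕ → R} {h : α → ℝ}

lemma isBigO_prod_one_add_sub_one (ha : a =O[uniformUpTo l T] fun p => h p.1)
    (hTh : Tendsto (fun x => T x * h x) l (𝓝 0)) :
    (fun p : α × ℕ => ∏ s ∈ range p.2, (1 + a (p.1, s)) - 1) =O[uniformUpTo l T]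
      fun p => T p.1 * h p.1 := by
  have hsum := isBigO_sum_uniformUpTo ha.norm_left
  have hexp := (Real.exp_sub_sum_range_isBigO_pow 1).comp_tendsto
    (hsum.trans_tendsto (hTh.comp tendsto_fst_uniformUpTo))
  simp only [Function.comp_def, sum_range_one, pow_zero, Nat.factorial_zero, Nat.cast_one,
    div_one, pow_one] at hexp
  refine IsBigO.trans (IsBigO.of_bound 1 (.of_forall fun p => ?_)) (hexp.trans hsum)
  rw [one_mul]
  exact ((range p.2).norm_prod_one_add_sub_one_le fun s => a (p.1, s)).trans (le_abs_self _)

-- The error is quadratic because `∏ (1 + a s) - 1 - ∑ a s = ∑ a s * (∏ r < s, (1 + a r) - 1)`.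
lemma isBigO_prod_one_add_sub_one_sub_sum (ha : a =O[uniformUpTo l T] fun p => h p.1)
    (hTh : Tendsto (fun x => T x * h x) l (𝓝 0)) :
    (fun p : α × ℕ => ∏ s ∈ range p.2, (1 + a (p.1, s)) - 1 - ∑ s ∈ range p.2, a (p.1, s))
      =O[uniformUpTo l T] fun p => (T p.1 * h p.1) ^ 2 := by
  have hprod := isBigO_prod_one_add_sub_one ha hTh
  refine (isBigO_sum_uniformUpTo (g := fun x => h x * (T x * h x)) (ha.mul hprod)).congr
    (fun p => ?_) fun p => by ring
  rw [prod_range_one_add_sub_one, ← sum_sub_distrib]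
  exact sum_congr rfl fun s _ => by ring

end UpTo

section Chain

lemma sum_binomPMF_mul_pow (n : ℕ) (p y : ℝ) :
    ∑ i ∈ range (n + 1), binomPMF n p i * y ^ i = (1 + p * (y - 1)) ^ n := by
  rw [show 1 + p * (y - 1) = p * y + (1 - p) by ring, add_pow]
  exact sum_congr rfl fun i _ => by rw [binomPMF, mul_pow]; ring

lemma tsum_prod_binomPMF_mul_prod_pow {ι : Type*} [Fintype ι] (c : ι → ℕ) (p y : ι → ℝ) :
    ∑' R : ι → ℕ, (∏ i, binomPMF (c i) (p i) (R i)) * ∏ i, y i ^ R i =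
      ∏ i, (1 + p i * (y i - 1)) ^ c i := by
  classical
  simp only [← prod_mul_distrib, ← sum_binomPMF_mul_pow, prod_univ_sum]
  refine tsum_eq_sum fun R hR => ?_
  obtain ⟨i, hi⟩ : ∃ i, c i < R i := by
    simpa [Fintype.mem_piFinset, Nat.lt_succ_iff] using hR
  exact prod_eq_zero (mem_univ i) (by simp [binomPMF, Nat.choose_eq_zero_of_lt hi])

/-- The multiplicative observable on the states of the chain: a pending variable has weight
`exp lam`, and a constraint with `j` unknown variables, `k - r + 2 ≤ j ≤ k`, has weight `y j`. -/
def stateWeight (k r : ℕ) (lam : ℝ) (y : ℕ → ℝ) (s : ℤ × (ℕ → ℕ)) : ℝ :=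
  Real.exp (lam * s.1) *
    ∏ i ∈ range (r - 1), y (k - r + 2 + i) ^ s.2 (k - r + 2 + i)

variable {k r : ℕ} {lam : ℝ} {y : ℕ → ℝ}

lemma Rext_add (R : Fin (r - 1) → ℕ) (i : ℕ) :
    Rext k r R (k - r + 2 + i) = if h : i < r - 1 then R ⟨i, h⟩ else 0 := by
  simp [Rext]

-- A constraint moving from level `j + 1` to level `j` trades its weight for `y j`, and one leaving
-- level `k - r + 2` releases `k - r + 1` variables, whose total weight is `y (k - r + 1)`.
lemma stateWeight_next (hrk : r ≤ k) (hy : y (k - r + 1) = Real.exp (lam * (k - r + 1 : ℕ)))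
    (s : ℤ × (ℕ → ℕ)) (R : Fin (r - 1) → ℕ) :
    stateWeight k r lam y
        (s.1 - 1 + ((k - r + 1 : ℕ) : ℤ) * (Rext k r R (k - r + 2) : ℤ),
          fun j => if k - r + 2 ≤ j ∧ j < k then s.2 j + Rext k r R (j + 1) else s.2 j) =
      Real.exp (-lam) * stateWeight k r lam y s * ∏ i : Fin (r - 1), y (k - r + 1 + i) ^ R i := by
  have hlevel : ∀ i ∈ range (r - 1),
      (if k - r + 2 ≤ k - r + 2 + i ∧ k - r + 2 + i < k
        then s.2 (k - r + 2 + i) + Rext k r R (k - r + 2 + i + 1) else s.2 (k - r + 2 + i)) =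
      s.2 (k - r + 2 + i) + Rext k r R (k - r + 2 + (i + 1)) := fun i hi => by
    split_ifs with hk
    · rfl
    · rw [Rext_add, dif_neg (by rw [mem_range] at hi; lia), add_zero]
  have hmoved : ∏ i : Fin (r - 1), y (k - r + 1 + i) ^ R i =
      (∏ i ∈ range (r - 1), y (k - r + 2 + i) ^ Rext k r R (k - r + 2 + (i + 1))) *
        Real.exp (lam * (k - r + 1 : ℕ)) ^ Rext k r R (k - r + 2) := by
    have hR : ∏ i : Fin (r - 1), y (k - r + 1 + i) ^ R i =
        ∏ i ∈ range (r - 1 + 1), y (k - r + 1 + i) ^ Rext k r R (k - r + 2 + i) := by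
      rw [prod_range_succ, Rext_add, dif_neg (lt_irrefl _), pow_zero, mul_one, Finset.prod_range]
      simp only [Rext_add, Fin.is_lt, dif_pos, Fin.eta]
    rw [hR, prod_range_succ', add_zero, add_zero, hy]
    simp only [show ∀ i, k - r + 1 + (i + 1) = k - r + 2 + i by lia]
  simp only [stateWeight]
  rw [prod_congr rfl fun i hi => by rw [hlevel i hi, pow_add], prod_mul_distrib, hmoved,
    ← Real.exp_nat_mul, Int.cast_add, Int.cast_sub, Int.cast_mul, Int.cast_one, Int.cast_natCast,
    Int.cast_natCast, show lam * (s.1 - 1 + (k - r + 1 : ℕ) * Rext k r R (k - r + 2)) =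
      -lam + lam * s.1 + Rext k r R (k - r + 2) * (lam * (k - r + 1 : ℕ)) by ring,
    Real.exp_add, Real.exp_add]
  ring

lemma upperStep_const_mul (n u t : ℕ) (c : ℝ) (g : ℤ × (ℕ → ℕ) → ℝ) (s : ℤ × (ℕ → ℕ)) :
    upperStep k r n u t (fun st => c * g st) s = c * upperStep k r n u t g s := by
  simp only [upperStep, mul_left_comm _ c, tsum_mul_left]

lemma upperStep_stateWeight (hrk : r ≤ k) (hy : y (k - r + 1) = Real.exp (lam * (k - r + 1 : ℕ)))
    (n u t : ℕ) (s : ℤ × (ℕ → ℕ)) :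
    upperStep k r n u t (stateWeight k r lam y) s =
      Real.exp (-lam) * stateWeight k r lam
        (fun j => y j * (1 + j / ((n : ℝ) - u - t) * (y (j - 1) - 1))) s := by
  simp only [upperStep, stateWeight_next hrk hy, mul_left_comm _ (_ * stateWeight k r lam y s),
    tsum_mul_left, tsum_prod_binomPMF_mul_prod_pow]
  simp only [stateWeight, mul_pow, prod_mul_distrib, ← mul_assoc, Finset.prod_range,
    show ∀ i, k - r + 2 + i - 1 = k - r + 1 + i by lia]

/-- The mean weight of a constraint with `j` unknown variables when `t` steps of the chain remain,
where `d = k - r + 1` and `N s` is the number of unknown variables when `s + 1` steps remain.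
Constraints never disappear from the chain for the upper bound, hence the product over all steps:
in each of them the constraint independently spawns a constraint with `j - 1` unknown variables
with probability `j / N s`. -/
def constraintWeight (d : ℕ) (lam : ℝ) (N : ℕ → ℝ) : ℕ → ℕ → ℝ
  | 0, _ => 1
  | j + 1, t => if j < d then Real.exp (lam * (j + 1 : ℕ))
      else ∏ s ∈ range t, (1 + (j + 1 : ℕ) / N s * (constraintWeight d lam N j s - 1))

variable {d : ℕ} {N : ℕ → ℝ}

lemma constraintWeight_of_le {j : ℕ} (hj : j ≤ d) (t : ℕ) :
    constraintWeight d lam N j t = Real.exp (lam * j) := by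
  cases j with
  | zero => simp [constraintWeight]
  | succ j => rw [constraintWeight, if_pos (Nat.lt_of_succ_le hj)]

lemma constraintWeight_succ {j : ℕ} (hj : d ≤ j) (t : ℕ) :
    constraintWeight d lam N (j + 1) t =
      ∏ s ∈ range t, (1 + (j + 1 : ℕ) / N s * (constraintWeight d lam N j s - 1)) := by
  rw [constraintWeight, if_neg hj.not_gt]

lemma upperIter_exp (hrk : r ≤ k) (n u s t : ℕ)
    (hN : ∀ i < t, N i = (n : ℝ) - u - (s + t - 1 - i : ℕ)) (st : ℤ × (ℕ → ℕ)) :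
    upperIter k r n u s t (fun st => Real.exp (lam * (st.1 : ℝ))) st =
      Real.exp (-lam) ^ t *
        stateWeight k r lam (constraintWeight (k - r + 1) lam N · t) st := by
  induction t generalizing s st with
  | zero =>
    simp only [upperIter, stateWeight, show ∀ i, k - r + 2 + i = k - r + 1 + i + 1 by lia,
      constraintWeight_succ le_self_add, range_zero, prod_empty, one_pow, prod_const_one, pow_zero,
      one_mul, mul_one]
  | succ t ih =>
    have hstep := ih (s + 1) fun i hi => by
      rw [hN i (by lia), show s + (t + 1) - 1 - i = s + 1 + t - 1 - i by lia]
    rw [upperIter, funext hstep, upperStep_const_mul,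
      upperStep_stateWeight hrk (constraintWeight_of_le le_rfl t), pow_succ, mul_assoc]
    congr 2
    simp only [stateWeight]
    congr 1
    refine prod_congr rfl fun i _ => ?_
    rw [show k - r + 2 + i = k - r + 1 + i + 1 by ring, constraintWeight_succ le_self_add,
      constraintWeight_succ le_self_add, prod_range_succ, hN t (by lia),
      show s + (t + 1) - 1 - t = s by lia, Nat.add_sub_cancel]

end Chain

section InitialState

lemma card_filter_image_eq {α : Type*} [Fintype α] [DecidableEq α] {k : ℕ} {s : Finset α}
    (hs : #s = k) : #{e : Fin k ↪ α | univ.image e = s} = k.factorial := by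
  have himage : ∀ e : Fin k ↪ α, univ.image e = s ↔ ∀ i, e i ∈ (s : Set α) := fun e => by
    have hcard : #s ≤ #(univ.image e) := by
      rw [card_image_of_injective _ e.injective, card_fin, hs]
    rw [← subset_iff_eq_of_card_le hcard, image_subset_iff]
    simp
  rw [filter_congr fun e _ => himage e, ← Fintype.card_subtype,
    Fintype.card_congr (Equiv.codRestrict (Fin k) (s : Set α)), Fintype.card_embedding_eq]
  simp [hs, Nat.descFactorial_self]

lemma card_filter_powersetCard_union {α : Type*} [DecidableEq α] {A B : Finset α}
    (hAB : Disjoint A B) {j k : ℕ} (hj : j ≤ k) :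
    #{s ∈ powersetCard k (A ∪ B) | #(s ∩ A) = j} = (#A).choose j * (#B).choose (k - j) := by
  have hjoin : ∀ s ⊆ A, ∀ t ⊆ B, (s ∪ t) ∩ A = s ∧ (s ∪ t) ∩ B = t := fun s hs t ht => by
    constructor <;> grind [Finset.disjoint_left]
  have hsplit : ∀ s ⊆ A ∪ B, #(s ∩ A) + #(s ∩ B) = #s := fun s hs => by
    rw [← card_union_of_disjoint (hAB.mono inter_subset_right inter_subset_right),
      ← inter_union_distrib_left, inter_eq_left.2 hs]
  rw [← card_powersetCard, ← card_powersetCard, ← card_product]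
  refine card_nbij' (fun s => (s ∩ A, s ∩ B)) (fun p => p.1 ∪ p.2) (fun s hs => ?_) (fun p hp => ?_)
    (fun s hs => ?_) (fun p hp => ?_)
  · simp only [coe_filter, mem_powersetCard, Set.mem_ofPred_eq] at hs
    have := hsplit s hs.1.1
    simp only [mem_coe, mem_product, mem_powersetCard, inter_subset_right, true_and]
    lia
  · simp only [mem_coe, mem_product, mem_powersetCard] at hp
    obtain ⟨⟨hpA, hcardA⟩, hpB, hcardB⟩ := hp
    have hunion := union_subset_union hpA hpB
    have := hsplit _ hunion
    simp only [hjoin _ hpA _ hpB, hcardA, hcardB] at this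
    simp only [coe_filter, mem_powersetCard, Set.mem_ofPred_eq, hjoin _ hpA _ hpB, hcardA, hunion]
    lia
  · simp only [coe_filter, mem_powersetCard, Set.mem_ofPred_eq] at hs
    exact (inter_union_distrib_left s A B).symm.trans (inter_eq_left.2 hs.1.1)
  · simp only [mem_coe, mem_product, mem_powersetCard] at hp
    exact Prod.ext (hjoin _ hp.1.1 _ hp.2.1).1 (hjoin _ hp.1.1 _ hp.2.1).2

/-- The number of variables of a constraint with neighborhood `e` which are not among the first
`u` variables. -/
def unknownCount {n k : ℕ} (u : ℕ) (e : Fin k ↪ Fin n) : ℕ :=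
  ((univ.image e).filter fun i : Fin n => u ≤ (i : ℕ)).card

lemma unknownCount_le {n k : ℕ} (u : ℕ) (e : Fin k ↪ Fin n) : unknownCount u e ≤ k :=
  (card_filter_le _ _).trans (card_image_le.trans (card_fin k).le)

lemma card_filter_unknownCount {n u : ℕ} (hu : u ≤ n) {j k : ℕ} (hj : j ≤ k) :
    #{e : Fin k ↪ Fin n | unknownCount u e = j} =
      (n - u).choose j * u.choose (k - j) * k.factorial := by
  let A : Finset (Fin n) := {i | u ≤ (i : ℕ)}
  let B : Finset (Fin n) := {i | ¬ u ≤ (i : ℕ)}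
  have hB : #B = u := by simp [B, Fin.card_filter_val_lt, hu]
  have hA : #A = n - u := by
    rw [← Nat.sub_eq_of_eq_add (card_filter_add_card_filter_not _).symm, hB, card_fin]
  have hunknown : ∀ e : Fin k ↪ Fin n, unknownCount u e = #(univ.image e ∩ A) := fun e => by
    rw [unknownCount, ← filter_mem_eq_inter]
    simp [A]
  have hcard := card_filter_powersetCard_union (A := A) (B := B)
    (disjoint_filter_filter_not univ univ fun i : Fin n => u ≤ (i : ℕ)) hj
  rw [filter_union_filter_not_eq, hA, hB] at hcard
  rw [← hcard, card_eq_sum_card_fiberwise (f := fun e : Fin k ↪ Fin n => univ.image e)]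
  · refine sum_const_nat fun s hs => ?_
    rw [mem_filter, mem_powersetCard] at hs
    rw [← card_filter_image_eq hs.1.2, filter_filter]
    congr 1 with e
    simp only [hunknown, mem_filter, mem_univ, true_and, and_iff_right_iff_imp]
    rintro rfl
    exact hs.2
  · intro e he
    simp only [coe_filter, mem_univ, true_and, Set.mem_ofPred_eq, hunknown] at he
    simp [he, card_image_of_injective _ e.injective]

/-- The probability that a uniformly random `k`-subset of an `n`-set, `u` of whose elements are
marked, has exactly `j` unmarked elements. -/
def hypergeomPMF (n u k j : ℕ) : ℝ :=
  (n - u).choose j * u.choose (k - j) / n.choose k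

lemma sum_unknownCount_div_card {n u : ℕ} (hu : u ≤ n) (k : ℕ) (y : ℕ → ℝ) :
    (∑ e : Fin k ↪ Fin n, y (unknownCount u e)) / Fintype.card (Fin k ↪ Fin n) =
      ∑ j ∈ range (k + 1), hypergeomPMF n u k j * y j := by
  have hmaps : ∀ e ∈ (univ : Finset (Fin k ↪ Fin n)), unknownCount u e ∈ range (k + 1) :=
    fun e _ => mem_range.2 (Nat.lt_succ_of_le (unknownCount_le u e))
  rw [← sum_fiberwise_of_maps_to' hmaps, sum_div, Fintype.card_embedding_eq, Fintype.card_fin,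
    Fintype.card_fin, Nat.descFactorial_eq_factorial_mul_choose]
  refine sum_congr rfl fun j hj => ?_
  have hk : (k.factorial : ℝ) ≠ 0 := by positivity
  rw [sum_const, card_filter_unknownCount hu (mem_range_succ_iff.1 hj), hypergeomPMF, nsmul_eq_mul]
  push_cast
  field_simp

lemma sum_hypergeomPMF {n u k : ℕ} (hu : u ≤ n) (hk : k ≤ n) :
    ∑ j ∈ range (k + 1), hypergeomPMF n u k j = 1 := by
  have hcard : Fintype.card (Fin k ↪ Fin n) ≠ 0 := by
    simpa [Fintype.card_embedding_eq, Nat.descFactorial_eq_zero_iff_lt] using hk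
  have hmean := sum_unknownCount_div_card hu k fun _ => 1
  rw [sum_const, card_univ, nsmul_one, div_self (Nat.cast_ne_zero.2 hcard)] at hmean
  simpa only [mul_one] using hmean.symm

lemma stateWeight_initState {n m k r u : ℕ} (hrk : r ≤ k) {lam : ℝ} {y : ℕ → ℝ}
    (hy : ∀ j ≤ k - r + 1, y j = Real.exp (lam * j)) (ω : Fin m → (Fin k ↪ Fin n)) :
    stateWeight k r lam y (initState n m k r u ω) = ∏ a, y (unknownCount u (ω a)) := by
  have hmaps : ∀ a ∈ (univ : Finset (Fin m)),
      unknownCount u (ω a) ∈ range (k - r + 2 + (r - 1)) := fun a _ => by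
    have := unknownCount_le u (ω a)
    rw [mem_range]
    lia
  have hpending : (((initState n m k r u ω).1 : ℤ) : ℝ) =
      ∑ j ∈ range (k - r + 2), (Cinit n m k u ω j : ℝ) * j := by
    rw [initState, range_eq_Ico, sum_eq_sum_Ico_succ_bot (by lia), zero_add,
      ← Ico_add_one_right_eq_Icc]
    push_cast
    rw [mul_zero, zero_add]
    exact sum_congr rfl fun j _ => mul_comm _ _
  have hexp : Real.exp (lam * (initState n m k r u ω).1) =
      ∏ j ∈ range (k - r + 2), y j ^ Cinit n m k u ω j := by
    rw [hpending, mul_sum, Real.exp_sum]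
    refine prod_congr rfl fun j hj => ?_
    rw [hy j (by rw [mem_range] at hj; lia), ← Real.exp_nat_mul, mul_left_comm]
  rw [← prod_fiberwise_of_maps_to' hmaps, prod_range_add, stateWeight, hexp]
  simp only [prod_const, initState, Cinit, unknownCount, nbhd]
  rfl

/-- The number `N t` of unknown variables at the time `t = T - 1 - s` at which `s + 1` of the `T`
steps of the chain remain, as a real number. -/
def unknownsLeft (n u T s : ℕ) : ℝ :=
  n - u - (T - 1 - s : ℕ)

/-- The mean, minus one, of the `constraintWeight` of a uniformly random constraint when `T` steps
of the chain remain and `u` of the `n` variables are known. -/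
def meanExcessWeight (k d : ℕ) (lam : ℝ) (n u T : ℕ) : ℝ :=
  ∑ j ∈ range (k + 1),
    hypergeomPMF n u k j * (constraintWeight d lam (unknownsLeft n u T) j T - 1)

lemma upperE_exp {n m k r u : ℕ} (hrk : r ≤ k) (hu : u ≤ n) (hk : k ≤ n) (lam : ℝ) (T : ℕ) :
    upperE k r n u m T (fun st => Real.exp (lam * (st.1 : ℝ))) =
      Real.exp (-lam) ^ T * (1 + meanExcessWeight k (k - r + 1) lam n u T) ^ m := by
  have hmean : 1 + meanExcessWeight k (k - r + 1) lam n u T =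
      (∑ e : Fin k ↪ Fin n,
        constraintWeight (k - r + 1) lam (unknownsLeft n u T) (unknownCount u e) T) /
          Fintype.card (Fin k ↪ Fin n) := by
    rw [meanExcessWeight, sum_unknownCount_div_card hu k
      (constraintWeight (k - r + 1) lam (unknownsLeft n u T) · T)]
    simp only [mul_sub, mul_one, sum_sub_distrib, sum_hypergeomPMF hu hk, add_sub_cancel]
  have hiter := upperIter_exp (lam := lam) (N := unknownsLeft n u T) hrk n u 0 T fun i _ => by
    rw [zero_add]
    rfl
  rw [upperE, hmean, div_pow, Fintype.sum_pow, Fintype.card_fun, Fintype.card_fin, Nat.cast_pow,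
    ← mul_div_assoc, mul_sum]
  congr 1
  refine sum_congr rfl fun ω _ => ?_
  rw [hiter, stateWeight_initState hrk fun j hj => constraintWeight_of_le hj T]

end InitialState

section Weight

variable {α : Type*} {l : Filter α} {T : α → ℕ} {x n : α → ℝ} {N : α → ℕ → ℝ} {d : ℕ} {lam : ℝ}

lemma sum_range_choose_left (i t : ℕ) : ∑ s ∈ range t, s.choose i = t.choose (i + 1) := by
  induction t with
  | zero => rfl
  | succ t ih => rw [sum_range_succ, ih, Nat.choose_succ_succ, add_comm]

/-- The leading term of `constraintWeight d lam N (d + i) t - 1` when all `N s` are close to `ν`: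
one of the `(d + i) * ⋯ * (d + 1)` ways of losing `i` variables, in order, takes place in one of the
`t.choose i` possible sets of time steps, and each of these losses has probability `1 / ν`. -/
def weightLeadingTerm (d : ℕ) (lam : ℝ) (ν : ℝ) (i t : ℕ) : ℝ :=
  (Real.exp (lam * d) - 1) * ((d + i).descFactorial i * t.choose i / ν ^ i)

lemma weightLeadingTerm_succ (d : ℕ) (lam ν : ℝ) (i t : ℕ) :
    weightLeadingTerm d lam ν (i + 1) t =
      ∑ s ∈ range t, (d + i + 1 : ℕ) / ν * weightLeadingTerm d lam ν i s := by
  simp only [weightLeadingTerm, ← add_assoc, Nat.succ_descFactorial_succ, ← sum_range_choose_left]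
  push_cast
  simp only [mul_sum, sum_div]
  exact sum_congr rfl fun s _ => by ring

lemma isBigO_weightLeadingTerm (hT : (fun a => (T a : ℝ)) =O[l] fun a => x a * n a)
    (hn : ∀ᶠ a in l, n a ≠ 0) (i : ℕ) :
    (fun p : α × ℕ => weightLeadingTerm d lam (n p.1) i p.2) =O[uniformUpTo l T]
      fun p => x p.1 ^ i := by
  have hchoose : (fun p : α × ℕ => (p.2.choose i : ℝ)) =O[uniformUpTo l T] fun p => (p.2 : ℝ) ^ i :=
    .of_norm_le fun p => by
      rw [RCLike.norm_natCast]
      exact_mod_cast Nat.choose_le_pow _ _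
  have hpow := hchoose.trans
    ((isBigO_snd_uniformUpTo.trans (hT.comp_tendsto tendsto_fst_uniformUpTo)).pow i)
  have hmul := (hpow.mul (isBigO_refl (fun p => (n p.1 ^ i)⁻¹) _)).const_mul_left
    ((Real.exp (lam * d) - 1) * (d + i).descFactorial i)
  refine hmul.congr' (.of_forall fun p => ?_) ?_
  · simp only [weightLeadingTerm]
    ring
  · filter_upwards [tendsto_fst_uniformUpTo.eventually hn] with p hp
    simp only [Function.comp_apply, mul_pow]
    field_simp

lemma isBigO_mul_inv_mul_pow (hT : (fun a => (T a : ℝ)) =O[l] fun a => x a * n a)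
    (hn : ∀ᶠ a in l, n a ≠ 0) (j : ℕ) :
    (fun a => T a * ((n a)⁻¹ * x a ^ j)) =O[l] fun a => x a ^ (j + 1) := by
  refine (hT.mul (isBigO_refl (fun a => (n a)⁻¹ * x a ^ j) l)).congr' .rfl ?_
  filter_upwards [hn] with a ha
  field_simp
  ring

lemma isBigO_prod_one_add_div_mul_sub_one_sub_sum {f M : α × ℕ → ℝ} {i : ℕ}
    (hx : Tendsto x l (𝓝 0)) (hn : ∀ᶠ a in l, n a ≠ 0)
    (hT : (fun a => (T a : ℝ)) =O[l] fun a => x a * n a)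
    (hN : HasLeadingTerm (uniformUpTo l T) (fun p => x p.1) (fun p => N p.1 p.2) 1 fun p => n p.1)
    (hM : M =O[uniformUpTo l T] fun p => x p.1 ^ i)
    (hf : (fun p => f p - M p) =O[uniformUpTo l T] fun p => x p.1 ^ (i + 1)) (c : ℝ) :
    (fun p : α × ℕ => ∏ s ∈ range p.2, (1 + c / N p.1 s * f (p.1, s)) - 1 -
        ∑ s ∈ range p.2, c / n p.1 * M (p.1, s)) =O[uniformUpTo l T] fun p => x p.1 ^ (i + 2) := by
  have hxu : Tendsto (fun p : α × ℕ => x p.1) (uniformUpTo l T) (𝓝 0) :=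
    hx.comp tendsto_fst_uniformUpTo
  have hdiv : HasLeadingTerm (uniformUpTo l T) (fun p => x p.1) (fun p => c / N p.1 p.2) c
      fun p => (n p.1)⁻¹ := by
    simpa only [div_eq_mul_inv, inv_one, mul_one] using (hN.inv hxu one_ne_zero).const_mul c
  have hTpow := isBigO_mul_inv_mul_pow hT hn
  have hfi : f =O[uniformUpTo l T] fun p => x p.1 ^ i := by
    have hxi := isBigO_pow_pow_of_le (hxu.isBigO_one ℝ) i.le_succ
    simpa only [sub_add_cancel] using (hf.trans hxi).add hM
  have hquadratic := isBigO_prod_one_add_sub_one_sub_sum (h := fun a => (n a)⁻¹ * x a ^ i)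
    ((hdiv.isBigO (hxu.isBigO_one ℝ)).mul hfi)
    ((hTpow i).trans_tendsto (by simpa using hx.pow (i + 1)))
  have hlinear : (fun p : α × ℕ => c / N p.1 p.2 * f p - c / n p.1 * M p) =O[uniformUpTo l T]
      fun p => (n p.1)⁻¹ * x p.1 ^ (i + 1) := by
    have hfst : (fun p : α × ℕ => (c / N p.1 p.2 - c * (n p.1)⁻¹) * f p) =O[uniformUpTo l T]
        fun p => (n p.1)⁻¹ * x p.1 ^ (i + 1) :=
      (IsBigO.mul hdiv hfi).congr_right fun p => by ring
    have hsnd := ((isBigO_refl (fun p : α × ℕ => (n p.1)⁻¹) _).const_mul_left c).mul hf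
    exact (hfst.add hsnd).congr_left fun p => by ring
  have hpow : (fun a => (T a * ((n a)⁻¹ * x a ^ i)) ^ 2) =O[l] fun a => x a ^ (i + 2) := by
    refine ((hTpow i).pow 2).trans ?_
    simp only [← pow_mul]
    exact isBigO_pow_pow_of_le (hx.isBigO_one ℝ) (by lia)
  have hsum := (isBigO_sum_uniformUpTo (g := fun a => (n a)⁻¹ * x a ^ (i + 1)) hlinear).trans
    ((hTpow (i + 1)).comp_tendsto tendsto_fst_uniformUpTo)
  refine ((hquadratic.trans (hpow.comp_tendsto tendsto_fst_uniformUpTo)).add hsum).congr_left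
    fun p => ?_
  rw [sum_sub_distrib]
  ring

lemma isBigO_constraintWeight_sub_one_sub
    (hx : Tendsto x l (𝓝 0)) (hn : ∀ᶠ a in l, n a ≠ 0)
    (hT : (fun a => (T a : ℝ)) =O[l] fun a => x a * n a)
    (hN : HasLeadingTerm (uniformUpTo l T) (fun p => x p.1) (fun p => N p.1 p.2) 1 fun p => n p.1)
    (i : ℕ) :
    (fun p : α × ℕ => constraintWeight d lam (N p.1) (d + i) p.2 - 1 -
        weightLeadingTerm d lam (n p.1) i p.2) =O[uniformUpTo l T] fun p => x p.1 ^ (i + 1) := by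
  induction i with
  | zero =>
    simp only [add_zero, constraintWeight_of_le le_rfl, weightLeadingTerm, Nat.descFactorial_zero,
      Nat.choose_zero_right, Nat.cast_one, pow_zero, mul_one, div_one, sub_self]
    exact isBigO_zero _ _
  | succ i ih =>
    simp only [← add_assoc, constraintWeight_succ le_self_add, weightLeadingTerm_succ]
    exact isBigO_prod_one_add_div_mul_sub_one_sub_sum hx hn hT hN
      (isBigO_weightLeadingTerm hT hn i) ih _

end Weight

section MomentGeneratingFunction

/-- The relative error `1 / u + u / n` of the asymptotic expansions: on the scale `u` it amounts to
`1 + u ^ 2 / n`. -/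
def relError (u : ℕ → ℕ) (n : ℕ) : ℝ :=
  1 / u n + (u n : ℝ) / n

variable {u : ℕ → ℕ}

lemma inv_isBigO_relError : (fun n => 1 / (u n : ℝ)) =O[atTop] relError u :=
  .of_norm_le fun n => by
    rw [Real.norm_of_nonneg (by positivity)]
    exact le_add_of_nonneg_right (by positivity)

lemma div_isBigO_relError : (fun n => (u n : ℝ) / n) =O[atTop] relError u :=
  .of_norm_le fun n => by
    rw [Real.norm_of_nonneg (by positivity)]
    exact le_add_of_nonneg_left (by positivity)

lemma isBigO_relError_mul_self : (fun n => (u n : ℝ)) =O[atTop] fun n => relError u n * n := by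
  refine (div_isBigO_relError.mul (isBigO_refl (fun n : ℕ => (n : ℝ)) atTop)).congr' ?_ .rfl
  filter_upwards [eventually_ne_atTop 0] with n hn
  field_simp

namespace UGood

lemma eventually_pos (hu : UGood u) : ∀ᶠ n in atTop, 0 < (u n : ℝ) :=
  hu.1.eventually_gt_atTop 0

lemma eventually_le (hu : UGood u) : ∀ᶠ n in atTop, u n ≤ n := by
  filter_upwards [hu.2.eventually_lt_const one_pos, eventually_gt_atTop 0] with n hlt hn
  exact_mod_cast ((div_lt_one (Nat.cast_pos.2 hn)).1 hlt).le

lemma tendsto_relError (hu : UGood u) : Tendsto (relError u) atTop (𝓝 0) := by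
  rw [← add_zero (0 : ℝ)]
  exact (tendsto_const_nhds.div_atTop hu.1).add hu.2

lemma relError_isBigO_one (hu : UGood u) : relError u =O[atTop] fun _ => (1 : ℝ) :=
  hu.tendsto_relError.isBigO_one ℝ

lemma one_isBigO_relError_mul (hu : UGood u) :
    (fun _ => (1 : ℝ)) =O[atTop] fun n => relError u n * u n := by
  refine (inv_isBigO_relError.mul (isBigO_refl (fun n => (u n : ℝ)) atTop)).congr' ?_ .rfl
  filter_upwards [hu.eventually_pos] with n hn
  field_simp

lemma isBigO_self (hu : UGood u) : (fun n => (u n : ℝ)) =O[atTop] fun n : ℕ => (n : ℝ) := by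
  refine .of_bound 1 ?_
  filter_upwards [hu.eventually_le] with n hn
  simpa using hn

lemma isBigO_pow_div_pow (hu : UGood u) {r : ℕ} (hr : 2 ≤ r) :
    (fun n => (u n : ℝ)) =O[atTop] fun n => (n : ℝ) ^ (r - 1) / (u n : ℝ) ^ (r - 2) := by
  refine (hu.isBigO_self.pow (r - 1)).mul (isBigO_refl (fun n => ((u n : ℝ) ^ (r - 2))⁻¹) atTop)
    |>.congr' ?_ (.of_forall fun n => (div_eq_mul_inv _ _).symm)
  filter_upwards [hu.eventually_pos] with n hn
  rw [show r - 1 = r - 2 + 1 by lia, pow_succ]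
  field_simp

lemma one_isBigO_relError_mul_of_isBigO (hu : UGood u) {s : ℕ → ℝ}
    (hs : (fun n => (u n : ℝ)) =O[atTop] s) :
    (fun _ => (1 : ℝ)) =O[atTop] fun n => relError u n * s n :=
  hu.one_isBigO_relError_mul.trans ((isBigO_refl (relError u) atTop).mul hs)

lemma hasLeadingTerm_natChoose (hu : UGood u) {v : ℕ → ℕ} {a : ℝ} {s : ℕ → ℝ}
    (hs : (fun n => (u n : ℝ)) =O[atTop] s)
    (hv : HasLeadingTerm atTop (relError u) (fun n => (v n : ℝ)) a s) (i : ℕ) :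
    HasLeadingTerm atTop (relError u) (fun n => ((v n).choose i : ℝ)) (a ^ i / i.factorial)
      fun n => s n ^ i :=
  hv.natChoose hu.relError_isBigO_one (hu.one_isBigO_relError_mul_of_isBigO hs) i

lemma hasLeadingTerm_sub (hu : UGood u) :
    HasLeadingTerm atTop (relError u) (fun n => ((n - u n : ℕ) : ℝ)) 1 fun n => (n : ℝ) := by
  refine IsBigO.congr' isBigO_relError_mul_self.neg_left ?_ .rfl
  filter_upwards [hu.eventually_le] with n hn
  rw [Nat.cast_sub hn]
  ring

lemma hasLeadingTerm_hypergeomPMF (hu : UGood u) {j k : ℕ} (hj : j ≤ k) :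
    HasLeadingTerm atTop (relError u) (fun n => hypergeomPMF n (u n) k j) (k.choose j)
      fun n => ((u n : ℝ) / n) ^ (k - j) := by
  have hn := (hu.hasLeadingTerm_natChoose hu.isBigO_self (.self atTop (relError u) _) k).inv
    hu.tendsto_relError (by positivity)
  have hknown := hu.hasLeadingTerm_natChoose (isBigO_refl _ _) (.self atTop (relError u) _) (k - j)
  have hmul := ((hu.hasLeadingTerm_natChoose hu.isBigO_self hu.hasLeadingTerm_sub j).mul
    hu.relError_isBigO_one hknown).mul hu.relError_isBigO_one hn
  have hcoeff : (1 : ℝ) ^ j / j.factorial * (1 ^ (k - j) / (k - j).factorial) *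
      (1 ^ k / (k.factorial : ℝ))⁻¹ = k.choose j := by
    rw [Nat.cast_choose ℝ hj]
    simp only [one_pow]
    field_simp
  rw [hcoeff] at hmul
  refine hmul.congr' (.of_forall fun n => rfl) ?_
  filter_upwards [eventually_ne_atTop 0] with n hn
  obtain ⟨i, rfl⟩ := Nat.exists_eq_add_of_le hj
  rw [Nat.add_sub_cancel_left, pow_add, div_pow]
  field_simp

end UGood

lemma sum_choose_mul_choose_mul_pow {d k : ℕ} (hd : d ≤ k) (τ : ℝ) :
    ∑ j ∈ range (k + 1), (k.choose j : ℝ) * (j.choose d * τ ^ (j - d)) =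
      k.choose d * (1 + τ) ^ (k - d) := by
  obtain ⟨i, rfl⟩ := Nat.exists_eq_add_of_le hd
  have hbelow : ∑ j ∈ range d, ((d + i).choose j : ℝ) * (j.choose d * τ ^ (j - d)) = 0 :=
    sum_eq_zero fun j hj => by simp [Nat.choose_eq_zero_of_lt (mem_range.1 hj)]
  rw [add_assoc, sum_range_add, hbelow, zero_add, add_comm 1 τ, Nat.add_sub_cancel_left, add_pow,
    mul_sum]
  refine sum_congr rfl fun j _ => ?_
  have hmul := Nat.choose_mul (n := d + i) (Nat.le_add_right d j)
  rw [Nat.add_sub_cancel_left, Nat.add_sub_cancel_left] at hmul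
  rw [← mul_assoc, ← Nat.cast_mul, hmul, Nat.add_sub_cancel_left]
  push_cast
  ring

lemma isBigO_div_mul_self {f : ℕ → ℝ} (hf : f =O[atTop] fun n => (u n : ℝ)) :
    f =O[atTop] fun n => (u n : ℝ) / n * n :=
  hf.congr' .rfl <| by
    filter_upwards [eventually_ne_atTop 0] with n hn
    field_simp

lemma hasLeadingTerm_unknownsLeft {T : ℕ → ℕ}
    (hT : (fun n => (T n : ℝ)) =O[atTop] fun n => (u n : ℝ)) :
    HasLeadingTerm (uniformUpTo atTop T) (fun p => (u p.1 : ℝ) / p.1)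
      (fun p => unknownsLeft p.1 (u p.1) (T p.1) p.2) 1 fun p => (p.1 : ℝ) := by
  have hdiff : (fun p : ℕ × ℕ => unknownsLeft p.1 (u p.1) (T p.1) p.2 - 1 * p.1)
      =O[uniformUpTo atTop T] fun p => (u p.1 : ℝ) + T p.1 := .of_norm_le fun p => by
    have hle : ((T p.1 - 1 - p.2 : ℕ) : ℝ) ≤ T p.1 := by exact_mod_cast by lia
    rw [unknownsLeft, Real.norm_eq_abs, abs_le]
    constructor <;> linarith [(u p.1).cast_nonneg (α := ℝ), (T p.1 - 1 - p.2).cast_nonneg (α := ℝ)]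
  exact hdiff.trans ((isBigO_div_mul_self ((isBigO_refl _ _).add hT)).comp_tendsto
    tendsto_fst_uniformUpTo)

namespace UGood

lemma hasLeadingTerm_weightLeadingTerm (hu : UGood u) {T : ℕ → ℕ} {τ : ℝ}
    (hT : HasLeadingTerm atTop (relError u) (fun n => (T n : ℝ)) τ fun n => (u n : ℝ))
    (d : ℕ) (lam : ℝ) (i : ℕ) :
    HasLeadingTerm atTop (relError u) (fun n => weightLeadingTerm d lam n i (T n))
      ((Real.exp (lam * d) - 1) * ((d + i).choose i * τ ^ i)) fun n => ((u n : ℝ) / n) ^ i := by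
  have hchoose := ((hu.hasLeadingTerm_natChoose (isBigO_refl _ _) hT i).mul
    hu.relError_isBigO_one (.self atTop _ fun n : ℕ => ((n : ℝ) ^ i)⁻¹)).const_mul
      ((Real.exp (lam * d) - 1) * (d + i).descFactorial i)
  have hcoeff : (Real.exp (lam * d) - 1) * (d + i).descFactorial i *
      (τ ^ i / i.factorial * 1) = (Real.exp (lam * d) - 1) * ((d + i).choose i * τ ^ i) := by
    rw [Nat.descFactorial_eq_factorial_mul_choose]
    push_cast
    field_simp
  rw [hcoeff] at hchoose
  refine hchoose.congr' (.of_forall fun n => ?_)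
    (.of_forall fun n => ((div_pow _ _ i).trans (div_eq_mul_inv _ _)).symm)
  simp only [weightLeadingTerm]
  ring

lemma hasLeadingTerm_constraintWeight_sub_one (hu : UGood u) {T : ℕ → ℕ} {τ : ℝ}
    (hT : HasLeadingTerm atTop (relError u) (fun n => (T n : ℝ)) τ fun n => (u n : ℝ))
    (d : ℕ) (lam : ℝ) (i : ℕ) :
    HasLeadingTerm atTop (relError u)
      (fun n => constraintWeight d lam (unknownsLeft n (u n) (T n)) (d + i) (T n) - 1)
      ((Real.exp (lam * d) - 1) * ((d + i).choose i * τ ^ i)) fun n => ((u n : ℝ) / n) ^ i := by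
  have hTu := hT.isBigO hu.relError_isBigO_one
  have hn : ∀ᶠ n : ℕ in atTop, (n : ℝ) ≠ 0 :=
    (eventually_ne_atTop 0).mono fun n hn => Nat.cast_ne_zero.2 hn
  have herr := (isBigO_constraintWeight_sub_one_sub (d := d) (lam := lam)
    (N := fun n => unknownsLeft n (u n) (T n)) hu.2 hn (isBigO_div_mul_self hTu)
    (hasLeadingTerm_unknownsLeft hTu) i).comp_tendsto tendsto_graph_uniformUpTo
  refine (hu.hasLeadingTerm_weightLeadingTerm hT d lam i).add_isBigO (herr.trans ?_)
  simpa only [Function.comp_def, pow_succ'] using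
    div_isBigO_relError.mul (isBigO_refl (fun n => ((u n : ℝ) / n) ^ i) atTop)

lemma hasLeadingTerm_hypergeomPMF_mul (hu : UGood u) {T : ℕ → ℕ} {τ : ℝ}
    (hT : HasLeadingTerm atTop (relError u) (fun n => (T n : ℝ)) τ fun n => (u n : ℝ))
    {d j k : ℕ} (hd : d ≤ k) (hj : j ≤ k) (lam : ℝ) :
    HasLeadingTerm atTop (relError u)
      (fun n => hypergeomPMF n (u n) k j *
        (constraintWeight d lam (unknownsLeft n (u n) (T n)) j (T n) - 1))
      ((Real.exp (lam * d) - 1) * (k.choose j * (j.choose d * τ ^ (j - d))))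
      fun n => ((u n : ℝ) / n) ^ (k - d) := by
  have hhyper := hu.hasLeadingTerm_hypergeomPMF hj
  rcases le_or_gt d j with hdj | hjd
  · obtain ⟨i, rfl⟩ := Nat.exists_eq_add_of_le hdj
    have hmul := hhyper.mul hu.relError_isBigO_one
      (hu.hasLeadingTerm_constraintWeight_sub_one hT d lam i)
    rw [Nat.choose_symm_add]
    simpa only [← pow_add, show k - (d + i) + i = k - d by lia,
      Nat.add_sub_cancel_left, mul_left_comm] using hmul
  · have hpow : (fun n => ((u n : ℝ) / n) ^ (k - j)) =O[atTop]
        fun n => relError u n * ((u n : ℝ) / n) ^ (k - d) :=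
      (isBigO_pow_pow_of_le (hu.2.isBigO_one ℝ) (by lia : k - d + 1 ≤ k - j)).trans <| by
        simpa only [pow_succ'] using
          div_isBigO_relError.mul (isBigO_refl (fun n => ((u n : ℝ) / n) ^ (k - d)) atTop)
    simp only [Nat.choose_eq_zero_of_lt hjd, Nat.cast_zero, zero_mul, mul_zero,
      constraintWeight_of_le hjd.le, mul_comm _ (Real.exp (lam * j) - 1)]
    exact .of_isBigO (((hhyper.isBigO hu.relError_isBigO_one).trans hpow).const_mul_left _)

lemma hasLeadingTerm_meanExcessWeight (hu : UGood u) {T : ℕ → ℕ} {τ : ℝ}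
    (hT : HasLeadingTerm atTop (relError u) (fun n => (T n : ℝ)) τ fun n => (u n : ℝ))
    {d k : ℕ} (hd : d ≤ k) (lam : ℝ) :
    HasLeadingTerm atTop (relError u) (fun n => meanExcessWeight k d lam n (u n) (T n))
      ((Real.exp (lam * d) - 1) * (k.choose d * (1 + τ) ^ (k - d)))
      fun n => ((u n : ℝ) / n) ^ (k - d) := by
  rw [← sum_choose_mul_choose_mul_pow hd, mul_sum]
  exact .sum _ fun j hj =>
    hu.hasLeadingTerm_hypergeomPMF_mul hT hd (mem_range_succ_iff.1 hj) lam

lemma hasLeadingTerm_mul_log_one_add (hu : UGood u) {f : ℕ → ℝ} {m : ℕ → ℕ} {a μ : ℝ} {r : ℕ}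
    (hr : 2 ≤ r) (hf : HasLeadingTerm atTop (relError u) f a fun n => ((u n : ℝ) / n) ^ (r - 1))
    (hm : HasLeadingTerm atTop (relError u) (fun n => (m n : ℝ)) μ
      fun n => (n : ℝ) ^ (r - 1) / (u n : ℝ) ^ (r - 2)) :
    HasLeadingTerm atTop (relError u) (fun n => m n * Real.log (1 + f n)) (μ * a)
      fun n => (u n : ℝ) := by
  have hxpow : Tendsto (fun n => ((u n : ℝ) / n) ^ (r - 1)) atTop (𝓝 0) := by
    simpa [show r - 1 ≠ 0 by lia] using hu.2.pow (r - 1)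
  have hxerr : (fun n => ((u n : ℝ) / n) ^ (r - 1)) =O[atTop] relError u :=
    (isBigO_pow_pow_of_le (hu.2.isBigO_one ℝ) (by lia : 1 ≤ r - 1)).trans
      (by simpa only [pow_one] using div_isBigO_relError)
  refine (hm.mul hu.relError_isBigO_one
    (hf.log_one_add hu.relError_isBigO_one hxpow hxerr)).congr' .rfl ?_
  filter_upwards [hu.eventually_pos, eventually_ne_atTop 0] with n hun hn
  rw [div_pow, show r - 1 = r - 2 + 1 by lia]
  field_simp
  ring

lemma eventually_one_add_meanExcessWeight_pos (hu : UGood u) {T : ℕ → ℕ} {τ : ℝ}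
    (hT : HasLeadingTerm atTop (relError u) (fun n => (T n : ℝ)) τ fun n => (u n : ℝ))
    {d k : ℕ} (hd : d < k) (lam : ℝ) :
    ∀ᶠ n in atTop, 0 < 1 + meanExcessWeight k d lam n (u n) (T n) := by
  have hscale : Tendsto (fun n => ((u n : ℝ) / n) ^ (k - d)) atTop (𝓝 0) := by
    simpa [Nat.sub_ne_zero_of_lt hd] using hu.2.pow (k - d)
  have hmean := (hu.hasLeadingTerm_meanExcessWeight hT hd.le lam).isBigO hu.relError_isBigO_one
  exact ((hmean.trans_tendsto hscale).eventually_const_lt neg_one_lt_zero).mono fun n hn =>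
    neg_lt_iff_pos_add'.1 hn

lemma eventually_upperE_pos_and_log_eq (hu : UGood u) {T : ℕ → ℕ} {τ : ℝ} {k r : ℕ}
    (hr : 2 ≤ r) (hrk : r ≤ k)
    (hT : HasLeadingTerm atTop (relError u) (fun n => (T n : ℝ)) τ fun n => (u n : ℝ))
    (m : ℕ → ℕ) (lam : ℝ) :
    ∀ᶠ n in atTop,
      0 < upperE k r n (u n) (m n) (T n) (fun st => Real.exp (lam * (st.1 : ℝ))) ∧
      Real.log (upperE k r n (u n) (m n) (T n) fun st => Real.exp (lam * (st.1 : ℝ))) =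
        m n * Real.log (1 + meanExcessWeight k (k - r + 1) lam n (u n) (T n)) + -lam * T n := by
  filter_upwards [hu.eventually_one_add_meanExcessWeight_pos hT (by lia : k - r + 1 < k) lam,
    hu.eventually_le, eventually_ge_atTop k] with n hpos hun hkn
  rw [upperE_exp hrk hun hkn lam (T n)]
  refine ⟨by positivity, ?_⟩
  rw [Real.log_mul (by positivity) (by positivity), Real.log_pow, Real.log_pow, Real.log_exp]
  ring

lemma hasLeadingTerm_log_upperE (hu : UGood u) {T m : ℕ → ℕ} {τ μ : ℝ} {k r : ℕ}
    (hr : 2 ≤ r) (hrk : r ≤ k)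
    (hT : HasLeadingTerm atTop (relError u) (fun n => (T n : ℝ)) τ fun n => (u n : ℝ))
    (hm : HasLeadingTerm atTop (relError u) (fun n => (m n : ℝ)) μ
      fun n => (n : ℝ) ^ (r - 1) / (u n : ℝ) ^ (r - 2)) (lam : ℝ) :
    HasLeadingTerm atTop (relError u) (fun n => Real.log
      (upperE k r n (u n) (m n) (T n) fun st => Real.exp (lam * (st.1 : ℝ))))
      (phiE k r μ lam τ) fun n => (u n : ℝ) := by
  have hmean := hu.hasLeadingTerm_meanExcessWeight hT (by lia : k - r + 1 ≤ k) lam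
  rw [show k - (k - r + 1) = r - 1 by lia] at hmean
  have hphi : μ * ((Real.exp (lam * (k - r + 1 : ℕ)) - 1) *
      (k.choose (k - r + 1) * (1 + τ) ^ (r - 1))) + -lam * τ = phiE k r μ lam τ := by
    rw [phiE, ← Nat.choose_symm (by lia : r - 1 ≤ k), show k - (r - 1) = k - r + 1 by lia]
    push_cast [hrk]
    ring_nf
  rw [← hphi]
  exact ((hu.hasLeadingTerm_mul_log_one_add hr hmean hm).add (hT.const_mul (-lam))).congr'
    ((hu.eventually_upperE_pos_and_log_eq hr hrk hT m lam).mono fun n hn => hn.2.symm) .rfl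

end UGood

lemma relError_mul_isBigO_max :
    (fun n => relError u n * u n) =O[atTop] fun n => max 1 ((u n : ℝ) ^ 2 / n) := by
  refine .of_bound 2 (.of_forall fun n => ?_)
  have hsplit : relError u n * u n = 1 / u n * u n + (u n : ℝ) ^ 2 / n := by
    rw [relError]
    ring
  have hone : 1 / (u n : ℝ) * u n ≤ 1 := by
    rw [one_div]
    exact inv_mul_le_one
  rw [Real.norm_of_nonneg (by rw [hsplit]; positivity), Real.norm_of_nonneg (by positivity), hsplit]
  linarith [le_max_left 1 ((u n : ℝ) ^ 2 / n), le_max_right 1 ((u n : ℝ) ^ 2 / n)]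

theorem stmt13_general (k r : ℕ) (hr : 2 ≤ r) (hrk : r ≤ k)
    (u : ℕ → ℕ) (hu : UGood u)
    (μ : ℝ) (hμ0 : 0 ≤ μ)
    (m : ℕ → ℕ) (hm : ∀ n, m n = ⌈μ * (n : ℝ) ^ (r - 1) / (u n : ℝ) ^ (r - 2)⌉₊)
    (τ lam : ℝ) (hτ : 0 ≤ τ) :
    ∃ C > (0 : ℝ), ∀ᶠ n in atTop,
      0 < upperE k r n (u n) (m n) ⌊τ * (u n : ℝ)⌋₊
            (fun st : ℤ × (ℕ → ℕ) => Real.exp (lam * (st.1 : ℝ))) ∧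
      |Real.log (upperE k r n (u n) (m n) ⌊τ * (u n : ℝ)⌋₊
            (fun st : ℤ × (ℕ → ℕ) => Real.exp (lam * (st.1 : ℝ))))
          - phiE k r μ lam τ * u n|
        ≤ C * max 1 ((u n : ℝ) ^ 2 / n) := by
  have hT : HasLeadingTerm atTop (relError u) (fun n => (⌊τ * u n⌋₊ : ℝ)) τ fun n => (u n : ℝ) := by
    simpa using ((HasLeadingTerm.self _ _ _).const_mul τ).natFloor hu.one_isBigO_relError_mul
      (.of_forall fun n => by positivity)
  have hm' : HasLeadingTerm atTop (relError u) (fun n => (m n : ℝ)) μ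
      fun n => (n : ℝ) ^ (r - 1) / (u n : ℝ) ^ (r - 2) := by
    simpa [hm, mul_div_assoc] using ((HasLeadingTerm.self _ _ _).const_mul μ).natCeil
      (hu.one_isBigO_relError_mul_of_isBigO (hu.isBigO_pow_div_pow hr))
      (.of_forall fun n => by positivity)
  have hlog := hu.hasLeadingTerm_log_upperE hr hrk hT hm' lam
  obtain ⟨C, hC, hbound⟩ := (IsBigO.trans hlog relError_mul_isBigO_max).exists_pos
  refine ⟨C, hC, ?_⟩
  filter_upwards [hu.eventually_upperE_pos_and_log_eq hr hrk hT m lam, hbound.bound] with n hpos hn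
  refine ⟨hpos.1, ?_⟩
  rwa [Real.norm_eq_abs, Real.norm_of_nonneg (zero_le_one.trans (le_max_left _ _))] at hn

end MomentGeneratingFunction

/-- Theorem `thm:UG`: for the upper-bound Markov chain with
`m = ⌈μ n^{r-1}/u(n)^{r-2}⌉`, for any constants `τ > 0` and `λ`,
`E[exp(λ Ē(⌊τ u(n)⌋))] = exp(φ_{k,r}(μ,λ,τ) u(n) + O(max{1, u(n)²/n}))`. -/
theorem stmt13 (k r : ℕ) (hr : 3 ≤ r) (hrk : r ≤ k)
    (u : ℕ → ℕ) (hu : UGood u)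
    (μ : ℝ) (hμ0 : 0 < μ)
    (m : ℕ → ℕ) (hm : ∀ n, m n = ⌈μ * (n : ℝ) ^ (r - 1) / (u n : ℝ) ^ (r - 2)⌉₊)
    (τ lam : ℝ) (hτ : 0 < τ) :
    ∃ C > (0 : ℝ), ∀ᶠ n in atTop,
      0 < upperE k r n (u n) (m n) ⌊τ * (u n : ℝ)⌋₊
            (fun st : ℤ × (ℕ → ℕ) => Real.exp (lam * (st.1 : ℝ))) ∧
      |Real.log (upperE k r n (u n) (m n) ⌊τ * (u n : ℝ)⌋₊
            (fun st : ℤ × (ℕ → ℕ) => Real.exp (lam * (st.1 : ℝ))))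
          - phiE k r μ lam τ * u n|
        ≤ C * max 1 ((u n : ℝ) ^ 2 / n) :=
  stmt13_general k r (by lia) hrk u hu μ hμ0.le m hm τ lam hτ.le
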